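/- Let ψ : [0,∞) → [0,∞). The following three conditions are equivalent: (1) ψ is ultrametric preserving (for every ultrametric space (X,d), the function ψ∘d is an ultrametric on X) and ψ is continuous at 0; (2) for every nonempty totally bounded ultrametric space (X,d), ψ∘d is an ultrametric on X and the space (X, ψ∘d) is totally bounded; (3) for every ultrametric space (X,d), ψ∘d is an ultrametric on X and the metrics d and ψ∘d generate the same topology on X (for every x ∈ X and ε > 0 there is δ > 0 with {y : d(x,y) < δ} ⊆ {y : ψ(d(x,y)) < ε}, and conversely). -/

import Mathlib

/-- `d` is an ultrametric on `X`: nonnegative, symmetric, vanishing exactly on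
the diagonal and satisfying the strong triangle inequality. -/
def IsUltrametricFn {X : Type*} (d : X → X → ℝ) : Prop :=
  (∀ x y, 0 ≤ d x y) ∧ (∀ x y, d x y = d y x) ∧ (∀ x y, d x y = 0 ↔ x = y) ∧
    (∀ x y z, d x y ≤ max (d x z) (d z y))

/-- `(X,d)` is totally bounded: for every `r > 0` finitely many open `d`-balls
of radius `r` cover `X`. -/
def TotallyBoundedFn {X : Type*} (d : X → X → ℝ) : Prop :=
  ∀ r : ℝ, 0 < r → ∃ s : Finset X, ∀ x : X, ∃ a ∈ s, d x a < r


theorem maxFn_ultra {X : Type} [DecidableEq X] (f : X → ℝ) (h0 : ∀ x, 0 ≤ f x)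
    (hf : Function.Injective f) :
    IsUltrametricFn (fun x y : X => if x = y then (0 : ℝ) else max (f x) (f y)) := by
  refine ⟨?_, ?_, ?_, ?_⟩
  · intro x y
    dsimp only
    split_ifs
    · exact le_rfl
    · exact le_max_of_le_left (h0 x)
  · intro x y
    dsimp only
    by_cases h : x = y
    · subst h; simp
    · rw [if_neg h, if_neg (Ne.symm h), max_comm]
  · intro x y
    dsimp only
    by_cases h : x = y
    · simp [h]
    · rw [if_neg h]
      refine ⟨fun e => hf ?_, fun e => absurd e h⟩
      have h1 := le_max_left (f x) (f y)
      have h2 := le_max_right (f x) (f y)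
      linarith [h0 x, h0 y]
  · intro x y z
    dsimp only
    have hx := h0 x
    have hy := h0 y
    have hz := h0 z
    by_cases h : x = y
    · rw [if_pos h]
      apply le_max_of_le_left
      split_ifs
      · exact le_rfl
      · exact le_max_of_le_left hx
    · rw [if_neg h]
      by_cases h1 : x = z
      · subst h1
        rw [if_neg h]
        exact le_max_right _ _
      · rw [if_neg h1]
        by_cases h2 : z = y
        · subst h2
          exact le_max_left _ _
        · rw [if_neg h2]
          exact max_le (le_max_of_le_left (le_max_left _ _))
            (le_max_of_le_right (le_max_right _ _))

/-- Amenable and increasing functions. -/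
def AmenMono (ψ : ℝ → ℝ) : Prop :=
  ψ 0 = 0 ∧ (∀ t, 0 < t → 0 < ψ t) ∧ ∀ a b, 0 ≤ a → a ≤ b → ψ a ≤ ψ b

theorem amenMono_of (ψ : ℝ → ℝ) (hψ : ∀ t : ℝ, 0 ≤ t → 0 ≤ ψ t)
    (h : ∀ d : Fin 3 → Fin 3 → ℝ, IsUltrametricFn d →
      IsUltrametricFn (fun x y => ψ (d x y))) : AmenMono ψ := by
  have key : ∀ a b, 0 < a → a < b → ψ 0 = 0 ∧ 0 < ψ a ∧ ψ a ≤ ψ b := by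
    intro a b ha hab
    have hu := h _ (maxFn_ultra (X := Fin 3) ![0, a, b]
      (by intro x; fin_cases x <;> simp <;> linarith)
      (by
        intro x y
        fin_cases x <;> fin_cases y <;> simp <;> intros <;> linarith))
    obtain ⟨h1, h2, h3, h4⟩ := hu
    have e0 := (h3 0 0).2 rfl
    have e1 := (h3 0 1)
    have e2 := h4 0 1 2
    have hb : 0 < b := ha.trans hab
    simp [ha.le, hb.le, hab.le] at e0 e1 e2
    exact ⟨e0, lt_of_le_of_ne (hψ a ha.le) (Ne.symm e1), e2⟩
  have z := (key 1 2 one_pos one_lt_two).1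
  refine ⟨z, fun t ht => (key t (t + 1) ht (by linarith)).2.1, ?_⟩
  intro a b ha hab
  rcases ha.eq_or_lt with rfl | ha
  · rw [z]; exact hψ b hab
  rcases hab.eq_or_lt with rfl | hab
  · exact le_rfl
  exact (key a b ha hab).2.2

theorem AmenMono.preserves {ψ : ℝ → ℝ} (h : AmenMono ψ) {X : Type} {d : X → X → ℝ}
    (hd : IsUltrametricFn d) : IsUltrametricFn (fun x y => ψ (d x y)) := by
  obtain ⟨z, p, m⟩ := h
  obtain ⟨h1, h2, h3, h4⟩ := hd
  refine ⟨fun x y => ?_, fun x y => ?_, fun x y => ?_, fun x y w => ?_⟩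
  · have := m 0 _ le_rfl (h1 x y)
    rwa [z] at this
  · simp only [h2 x y]
  · rw [← h3 x y]
    constructor
    · intro e
      by_contra hne
      exact (p _ (lt_of_le_of_ne (h1 x y) (Ne.symm hne))).ne' e
    · intro e
      simp only [e, z]
  · rcases le_max_iff.1 (h4 x y w) with q | q
    · exact le_max_of_le_left (m _ _ (h1 x y) q)
    · exact le_max_of_le_right (m _ _ (h1 x y) q)

theorem cont_iff {ψ : ℝ → ℝ} (h : AmenMono ψ) : ContinuousWithinAt ψ (Set.Ici 0) 0 ↔
    ∀ ε, 0 < ε → ∃ δ, 0 < δ ∧ ∀ t, 0 ≤ t → t < δ → ψ t < ε := by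
  rw [Metric.continuousWithinAt_iff]
  have hn : ∀ t, 0 ≤ t → 0 ≤ ψ t := fun t ht => by
    have := h.2.2 0 t le_rfl ht
    rwa [h.1] at this
  refine forall_congr' fun ε => forall_congr' fun _ => exists_congr fun δ =>
    and_congr_right fun _ => forall_congr' fun t => ?_
  rw [Set.mem_Ici, h.1, Real.dist_eq, Real.dist_eq, sub_zero, sub_zero]
  refine forall_congr' fun ht => ?_
  rw [abs_of_nonneg ht, abs_of_nonneg (hn t ht)]

theorem fin_tb {X : Type} [Fintype X] {d : X → X → ℝ} (hd : IsUltrametricFn d) :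
    TotallyBoundedFn d := fun r hr =>
  ⟨Finset.univ, fun x => ⟨x, Finset.mem_univ _, by rw [(hd.2.2.1 x x).2 rfl]; exact hr⟩⟩

/-- A function `ψ : [0,∞) → [0,∞)` is ultrametric preserving and continuous at
`0` iff it preserves total boundedness of ultrametric spaces iff it preserves
every ultrametric together with its topology. -/
theorem preserving_totally_bounded_ultrametrics (ψ : ℝ → ℝ)
    (hψ : ∀ t : ℝ, 0 ≤ t → 0 ≤ ψ t) :
    (((∀ (X : Type) (d : X → X → ℝ), IsUltrametricFn d →
          IsUltrametricFn (fun x y : X => ψ (d x y))) ∧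
        ContinuousWithinAt ψ (Set.Ici 0) 0) ↔
      (∀ (X : Type) (d : X → X → ℝ), Nonempty X → IsUltrametricFn d →
        TotallyBoundedFn d →
          IsUltrametricFn (fun x y : X => ψ (d x y)) ∧
          TotallyBoundedFn (fun x y : X => ψ (d x y)))) ∧
    ((∀ (X : Type) (d : X → X → ℝ), Nonempty X → IsUltrametricFn d →
        TotallyBoundedFn d →
          IsUltrametricFn (fun x y : X => ψ (d x y)) ∧
          TotallyBoundedFn (fun x y : X => ψ (d x y))) ↔
      (∀ (X : Type) (d : X → X → ℝ), IsUltrametricFn d →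
        IsUltrametricFn (fun x y : X => ψ (d x y)) ∧
        ∀ (x : X) (ε : ℝ), 0 < ε →
          (∃ δ : ℝ, 0 < δ ∧ ∀ y : X, d x y < δ → ψ (d x y) < ε) ∧
          (∃ δ : ℝ, 0 < δ ∧ ∀ y : X, ψ (d x y) < δ → d x y < ε))) := by
  have A1 : (∀ (X : Type) (d : X → X → ℝ), IsUltrametricFn d →
      IsUltrametricFn (fun x y : X => ψ (d x y))) → AmenMono ψ :=
    fun h => amenMono_of ψ hψ (fun d hd => h _ d hd)
  have h12 : ((∀ (X : Type) (d : X → X → ℝ), IsUltrametricFn d →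
          IsUltrametricFn (fun x y : X => ψ (d x y))) ∧
        ContinuousWithinAt ψ (Set.Ici 0) 0) ↔
      (∀ (X : Type) (d : X → X → ℝ), Nonempty X → IsUltrametricFn d →
        TotallyBoundedFn d →
          IsUltrametricFn (fun x y : X => ψ (d x y)) ∧
          TotallyBoundedFn (fun x y : X => ψ (d x y))) := by
    constructor
    · rintro ⟨hp, hc⟩ X d _ hd ht
      refine ⟨hp X d hd, fun r hr => ?_⟩
      obtain ⟨δ, hδ, hδ'⟩ := (cont_iff (A1 hp)).1 hc r hr
      obtain ⟨s, hs⟩ := ht δ hδ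
      refine ⟨s, fun x => ?_⟩
      obtain ⟨a, ha, hx⟩ := hs x
      exact ⟨a, ha, hδ' _ (hd.1 x a) hx⟩
    · intro h
      have hA : AmenMono ψ :=
        amenMono_of ψ hψ (fun d hd => (h _ d ⟨0⟩ hd (fin_tb hd)).1)
      refine ⟨fun X d hd => hA.preserves hd, (cont_iff hA).2 fun ε hε => ?_⟩
      have hpos : ∀ n : ℕ, 0 < 1 / ((n : ℝ) + 1) := fun n => Nat.one_div_pos_of_nat
      have hu := maxFn_ultra (X := ℕ) (fun n => 1 / ((n : ℝ) + 1)) (fun n => (hpos n).le)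
        (by
          intro m n e
          have e' : 1 / ((m : ℝ) + 1) = 1 / ((n : ℝ) + 1) := e
          rw [one_div, one_div, inv_inj] at e'
          exact_mod_cast add_right_cancel e')
      have htb := (h _ _ ⟨0⟩ hu (by
        intro r hr
        obtain ⟨N, hN⟩ := exists_nat_one_div_lt hr
        refine ⟨Finset.range (N + 1), fun x => ?_⟩
        by_cases hx : x ≤ N
        · exact ⟨x, Finset.mem_range.2 (by omega), by simpa using hr⟩
        · refine ⟨N, Finset.mem_range.2 (by omega), ?_⟩
          dsimp only
          rw [if_neg (by omega)]
          refine max_lt (lt_of_le_of_lt ?_ hN) hN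
          exact Nat.one_div_le_one_div (by omega))).2
      obtain ⟨s, hs⟩ := htb ε hε
      obtain ⟨n, hn⟩ := Infinite.exists_notMem_finset s
      obtain ⟨a, ha, hlt⟩ := hs n
      have hna : n ≠ a := by rintro rfl; exact hn ha
      dsimp only at hlt
      rw [if_neg hna] at hlt
      refine ⟨_, hpos n, fun t ht htn => lt_of_le_of_lt (hA.2.2 _ _ ht ?_) hlt⟩
      exact le_max_of_le_left htn.le
  refine ⟨h12, h12.symm.trans ?_⟩
  constructor
  · rintro ⟨hp, hc⟩ X d hd
    have hA := A1 hp
    refine ⟨hp X d hd, fun x ε hε => ⟨?_, ?_⟩⟩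
    · obtain ⟨δ, hδ, hδ'⟩ := (cont_iff hA).1 hc ε hε
      exact ⟨δ, hδ, fun y hy => hδ' _ (hd.1 x y) hy⟩
    · refine ⟨ψ ε, hA.2.1 ε hε, fun y hy => ?_⟩
      by_contra hn
      exact absurd (hA.2.2 _ _ hε.le (not_lt.1 hn)) (not_le.2 hy)
  · intro h
    have hp : ∀ (X : Type) (d : X → X → ℝ), IsUltrametricFn d →
      IsUltrametricFn (fun x y : X => ψ (d x y)) := fun X d hd => (h X d hd).1
    have hA := A1 hp
    refine ⟨hp, (cont_iff hA).2 fun ε hε => ?_⟩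
    classical
    have hu := maxFn_ultra (X := {t : ℝ // 0 ≤ t}) (fun t => t.1) (fun t => t.2)
      Subtype.val_injective
    obtain ⟨δ, hδ, hδ'⟩ := ((h _ _ hu).2 ⟨0, le_rfl⟩ ε hε).1
    refine ⟨δ, hδ, fun t ht htd => ?_⟩
    rcases ht.eq_or_lt with rfl | hpos
    · rw [hA.1]; exact hε
    have hne : (⟨0, le_rfl⟩ : {t : ℝ // 0 ≤ t}) ≠ ⟨t, ht⟩ := by
      intro e
      exact hpos.ne (congrArg Subtype.val e)
    have q := hδ' ⟨t, ht⟩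
    dsimp only at q
    rw [if_neg hne, max_eq_right ht] at q
    exact q htd
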